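/- Let ι be a type and let (C i) be an ι-indexed family of categories, each admitting a zero object and ι-indexed products and coproducts. In the product category ∏ j, C j, let (X i)_{i ∈ ι} be a family of objects such that each X i is concentrated in component i. Then both the coproduct ∐ i, X i and the product ∏ i, X i exist in ∏ j, C j, and the canonical morphism ∐ i, X i → ∏ i, X i — whose (i,j)-component is the identity of X i in component i for j = i and the zero morphism for j ≠ i — is an isomorphism. (This is the abstract content of the paper's observation that ⊕_μ CT_*^μ ≃ ∏_μ CT_*^μ, which is the key step in proving that Eis_! is left adjoint to CT_*.) -/

import Mathlib

open CategoryTheory CategoryTheory.Limits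
open scoped Classical

universe w v u

/-- The canonical `(i,j)`-component morphism `X i ⟶ X j` in the product category:
the identity (transported along `i = j`) when `j = i`, and the (componentwise) zero
morphism, defined using the zero objects of the categories `C k`, when `j ≠ i`. -/
noncomputable def diagonalComponent {ι : Type w} (C : ι → Type u) [∀ i, Category.{v} (C i)]
    [∀ i, HasZeroObject (C i)] (X : ι → ∀ j, C j) (i j : ι) : X i ⟶ X j :=
  if h : i = j then eqToHom (congrArg X h)
  else
    show ∀ k, X i k ⟶ X j k from fun k =>
      letI : HasZeroMorphisms (C k) := HasZeroObject.zeroMorphismsOfZeroObject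
      0

/-!
Since `X i` is concentrated in component `i`, morphisms into and out of it are determined by their
`i`-th component. Hence only the diagonal components of a cone or cocone over `X` matter, and the
object `k ↦ X k k` is both the product and the coproduct of the family: it is a biproduct.
The canonical morphism is the comparison isomorphism through that biproduct.
-/

/-- An object of a product category is concentrated in component `i` if all its other components
are zero objects. -/
def IsConcentratedIn {ι : Type w} {C : ι → Type u} [∀ i, Category.{v} (C i)]
    (X : ∀ j, C j) (i : ι) : Prop :=
  ∀ j, j ≠ i → IsZero (X j)

namespace IsConcentratedIn

variable {ι : Type w} {C : ι → Type u} [∀ i, Category.{v} (C i)] {X Y : ∀ j, C j} {i : ι}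

lemma hom_ext_src (hX : IsConcentratedIn X i) {f g : X ⟶ Y} (h : f i = g i) : f = g := by
  ext j
  obtain rfl | hj := eq_or_ne j i
  · exact h
  · exact (hX j hj).eq_of_src _ _

lemma hom_ext_tgt (hY : IsConcentratedIn Y i) {f g : X ⟶ Y} (h : f i = g i) : f = g := by
  ext j
  obtain rfl | hj := eq_or_ne j i
  · exact h
  · exact (hY j hj).eq_of_tgt _ _

end IsConcentratedIn

lemma isIso_sigmaDesc_piLift_of_hasBiproduct {J : Type w} {D : Type u} [Category.{v} D]
    [HasZeroMorphisms D] (F : J → D) [HasBiproduct F] :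
    IsIso (Sigma.desc fun i => Pi.lift fun j => biproduct.ι F i ≫ biproduct.π F j) := by
  have factorization : (Sigma.desc fun i => Pi.lift fun j => biproduct.ι F i ≫ biproduct.π F j) =
      (biproduct.isoCoproduct F).inv ≫ (biproduct.isoProduct F).hom := by
    ext i j
    simp
  rw [factorization]
  infer_instance

section ZeroMorphisms

variable {ι : Type w} {C : ι → Type u} [∀ i, Category.{v} (C i)] [∀ i, HasZeroMorphisms (C i)]

/-- The zero morphisms of a product category, which are zero in each component. -/
instance piHasZeroMorphisms : HasZeroMorphisms (∀ i, C i) where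
  zero X Y := inferInstanceAs (Zero (∀ i, X i ⟶ Y i))
  comp_zero _ _ := funext fun _ => comp_zero
  zero_comp _ _ _ _ := funext fun _ => zero_comp

lemma pi_zero_apply (X Y : ∀ j, C j) (i : ι) : (0 : X ⟶ Y) i = 0 :=
  rfl

/-- The morphism of a product category with component `f` at `i` and zero components elsewhere. -/
noncomputable def homOfComponent {X Y : ∀ j, C j} {i : ι} (f : X i ⟶ Y i) : X ⟶ Y :=
  Pi.single (M := fun j => X j ⟶ Y j) i f

lemma homOfComponent_self {X Y : ∀ j, C j} {i : ι} (f : X i ⟶ Y i) :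
    homOfComponent f i = f :=
  Pi.single_eq_same (M := fun j => X j ⟶ Y j) i f

lemma homOfComponent_of_ne {X Y : ∀ j, C j} {i j : ι} (f : X i ⟶ Y i) (h : j ≠ i) :
    homOfComponent f j = 0 :=
  Pi.single_eq_of_ne (M := fun j => X j ⟶ Y j) h f

variable {X : ι → ∀ j, C j}

/-- The bicone over a family `X` of concentrated objects with point `k ↦ X k k`, whose `i`-th
inclusion and projection are the identity of `X i i` in component `i` and zero elsewhere. -/
noncomputable def diagonalBicone (hX : ∀ i, IsConcentratedIn (X i) i) : Bicone X where
  pt k := X k k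
  ι i := homOfComponent (𝟙 (X i i))
  π i := homOfComponent (𝟙 (X i i))
  ι_π i j := by
    refine (hX i).hom_ext_src ?_
    rw [Pi.comp_apply, homOfComponent_self, Category.id_comp]
    obtain rfl | hij := eq_or_ne i j
    · simp [homOfComponent_self]
    · simp [hij, homOfComponent_of_ne, pi_zero_apply]

lemma diagonalBicone_ι_comp_self (hX : ∀ i, IsConcentratedIn (X i) i) {W : ∀ j, C j}
    (f : (diagonalBicone hX).pt ⟶ W) (i : ι) : ((diagonalBicone hX).ι i ≫ f) i = f i :=
  (congrArg (· ≫ f i) (homOfComponent_self (𝟙 (X i i)))).trans (Category.id_comp _)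

lemma diagonalBicone_comp_π_self (hX : ∀ i, IsConcentratedIn (X i) i) {W : ∀ j, C j}
    (f : W ⟶ (diagonalBicone hX).pt) (i : ι) : (f ≫ (diagonalBicone hX).π i) i = f i :=
  (congrArg (f i ≫ ·) (homOfComponent_self (𝟙 (X i i)))).trans (Category.comp_id _)

/-- The diagonal bicone is a biproduct: a cone or cocone over `X` factors through it by its
diagonal components. -/
noncomputable def diagonalBiconeIsBilimit (hX : ∀ i, IsConcentratedIn (X i) i) :
    (diagonalBicone hX).IsBilimit where
  isLimit := Fan.IsLimit.mk _ (fun s k => s.proj k k)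
    (fun _ i => (hX i).hom_ext_tgt (diagonalBicone_comp_π_self hX _ i))
    (fun _ m hm => funext fun k =>
      (diagonalBicone_comp_π_self hX m k).symm.trans (congrFun (hm k) k))
  isColimit := Cofan.IsColimit.mk _ (fun s k => s.inj k k)
    (fun _ i => (hX i).hom_ext_src (diagonalBicone_ι_comp_self hX _ i))
    (fun _ m hm => funext fun k =>
      (diagonalBicone_ι_comp_self hX m k).symm.trans (congrFun (hm k) k))

lemma hasBiproduct_of_isConcentratedIn (hX : ∀ i, IsConcentratedIn (X i) i) : HasBiproduct X :=
  HasBiproduct.mk ⟨diagonalBicone hX, diagonalBiconeIsBilimit hX⟩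

end ZeroMorphisms

theorem isIso_coproduct_to_product_of_concentrated_general
    {ι : Type w} (C : ι → Type u) [∀ i, Category.{v} (C i)] [∀ i, HasZeroObject (C i)]
    (X : ι → ∀ j, C j) (hX : ∀ i, IsConcentratedIn (X i) i) :
    ∃ (h₁ : HasColimit (Discrete.functor X)) (h₂ : HasLimit (Discrete.functor X)),
      letI := h₁
      letI := h₂
      IsIso (Sigma.desc fun i => Pi.lift fun j => diagonalComponent C X i j) := by
  let (i : ι) : HasZeroMorphisms (C i) := HasZeroObject.zeroMorphismsOfZeroObject
  have := hasBiproduct_of_isConcentratedIn hX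
  -- `diagonalComponent` unfolds to the right-hand side of `biproduct.ι_π`.
  have component_eq (i j : ι) :
      diagonalComponent C X i j = biproduct.ι X i ≫ biproduct.π X j :=
    (biproduct.ι_π X i j).symm
  refine ⟨inferInstance, inferInstance, ?_⟩
  simp only [component_eq]
  exact isIso_sigmaDesc_piLift_of_hasBiproduct X

/-- If each object `X i` of the product category `∏ j, C j` is concentrated in component `i`,
then the coproduct and the product of the family `X` exist, and the canonical morphism
`∐ i, X i ⟶ ∏ i, X i` (identity components on the diagonal, zero off the diagonal) is an
isomorphism. -/
theorem isIso_coproduct_to_product_of_concentrated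
    {ι : Type w} (C : ι → Type u) [∀ i, Category.{v} (C i)]
    [∀ i, HasZeroObject (C i)]
    [∀ i, HasLimitsOfShape (Discrete ι) (C i)]
    [∀ i, HasColimitsOfShape (Discrete ι) (C i)]
    (X : ι → ∀ j, C j)
    (hX : ∀ i j, j ≠ i → IsZero (X i j)) :
    ∃ (h₁ : HasColimit (Discrete.functor X)) (h₂ : HasLimit (Discrete.functor X)),
      letI := h₁
      letI := h₂
      IsIso (Sigma.desc fun i => Pi.lift fun j => diagonalComponent C X i j) :=
  isIso_coproduct_to_product_of_concentrated_general C X hX
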